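/- Let h ≥ 2, k ≥ 2, 1 ≤ π < k and let w be a nonnegative integer with w < h−2. If B is a deterministic k-way branching program solving BT^h_2(k) such that (a) |LeftThrifty(q)| ≤ π and |RightThrifty(q)| ≤ π for every state q of B labeled with an internal node variable, and (b) for every input I there are at most w nodes i of T^h such that the computation path of I visits a state q labeled with an i-variable with |RightThrifty(q)| > 1 or |LeftThrifty(q)| > 1, then B has at least k^h / π^{w} states. -/

import Mathlib

/-! Framework: the tree evaluation problem and deterministic k-way branching programs.

The balanced binary tree of height `h` has nodes numbered heap-style `1, …, 2^h - 1`: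
the root is node `1` and the children of node `i` are `2i` and `2i+1`.
Elements of `[k] = {1,…,k}` are represented by `Fin k` (the element `1 ∈ [k]`
corresponds to `(0 : Fin k)`). -/

/-- Node `i` is a leaf of the height-`h` balanced binary tree. -/
def IsLeafNode (h i : ℕ) : Prop := 2 ^ (h - 1) ≤ i ∧ i < 2 ^ h

/-- Node `i` is an internal node of the height-`h` balanced binary tree. -/
def IsInternalNode (h i : ℕ) : Prop := 1 ≤ i ∧ i < 2 ^ (h - 1)

/-- An input to the height-`h` tree evaluation problem over `[k]`: a binary function on `[k]`
for each internal node and a value in `[k]` for each leaf (values at irrelevant indices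
are ignored). -/
structure TEInput (h k : ℕ) where
  f : ℕ → Fin k → Fin k → Fin k
  leaf : ℕ → Fin k

/-- Auxiliary recursion (on fuel) computing node values. -/
def TEInput.valAux {h k : ℕ} (I : TEInput h k) : ℕ → ℕ → Fin k
  | 0, i => I.leaf i
  | m + 1, i =>
      if 2 ^ (h - 1) ≤ i then I.leaf i
      else I.f i (I.valAux m (2 * i)) (I.valAux m (2 * i + 1))

/-- The value `v_i^I` of node `i`: the leaf value if `i` is a leaf, and
`f_i^I (v_{2i}^I, v_{2i+1}^I)` if `i` is an internal node. -/
def TEInput.val {h k : ℕ} (I : TEInput h k) (i : ℕ) : Fin k := I.valAux h i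

/-- The input variables of the tree evaluation problem: one variable `f_i(a,b)` for each
internal node `i` and `a b ∈ [k]`, and one variable `l_i` for each leaf `i`. -/
inductive TEVar (h k : ℕ) where
  | internal (i : ℕ) (hi : IsInternalNode h i) (a b : Fin k) : TEVar h k
  | leaf (i : ℕ) (hi : IsLeafNode h i) : TEVar h k

/-- The value of a variable under an input. -/
def TEInput.evalVar {h k : ℕ} (I : TEInput h k) : TEVar h k → Fin k
  | .internal i _ a b => I.f i a b
  | .leaf i _ => I.leaf i

/-- The node a variable belongs to. -/
def TEVar.node {h k : ℕ} : TEVar h k → ℕ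
  | .internal i _ _ _ => i
  | .leaf i _ => i

/-- `X` is the thrifty `i` variable of input `I`: it is `f_i(v_{2i}^I, v_{2i+1}^I)`
if `i` is an internal node, and `l_i` if `i` is a leaf. -/
def IsThriftyVarOf {h k : ℕ} (I : TEInput h k) (i : ℕ) : TEVar h k → Prop
  | .internal j _ a b => j = i ∧ a = I.val (2 * j) ∧ b = I.val (2 * j + 1)
  | .leaf j _ => j = i

/-- A deterministic `k`-way branching program with variables indexed by `V` and
output set `R`: a set of states (of cardinality `size`), a start state, each state
labeled either with a variable to query (non-output states, with `k` out-edges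
labeled `1,…,k`) or with an output value (output sink states). -/
structure DetBP (V : Type) (k : ℕ) (R : Type) where
  size : ℕ
  start : Fin size
  label : Fin size → V ⊕ R
  next : Fin size → Fin k → Fin size

namespace DetBP

variable {V : Type} {k : ℕ} {R : Type}

/-- One step of computation on input `x`: from a state querying variable `v`, follow
the out-edge labeled `x v`; output states are sinks. -/
def step (B : DetBP V k R) (x : V → Fin k) (s : Fin B.size) : Fin B.size :=
  match B.label s with
  | .inl v => B.next s (x v)
  | .inr _ => s

/-- The state of the computation path of `x` at time `t`. -/
def run (B : DetBP V k R) (x : V → Fin k) (t : ℕ) : Fin B.size :=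
  (B.step x)^[t] B.start

/-- The depth of `B` is at most `D`: on every input, the computation path reaches an
output state within its first `D` states. -/
def DepthLE (B : DetBP V k R) (D : ℕ) : Prop :=
  ∀ x : V → Fin k, ∃ t < D, (B.label (B.run x t)).isRight = true

/-- `B` solves the function tree evaluation problem `FT^h_2(k)`: on every input `I`, the
computation path ends in the output state labeled with the root value `v_1^I`. -/
def SolvesFT {h : ℕ} (B : DetBP (TEVar h k) k (Fin k)) : Prop :=
  ∀ I : TEInput h k, ∃ t, B.label (B.run I.evalVar t) = Sum.inr (I.val 1)

/-- `B` solves the decision tree evaluation problem `BT^h_2(k)`: on every input `I`, the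
computation path ends in the output state labeled with whether `v_1^I = 1`
(the element `1 ∈ [k]` being `(0 : Fin k)`). -/
def SolvesBT {h : ℕ} (B : DetBP (TEVar h k) k Bool) : Prop :=
  ∀ I : TEInput h k, ∃ t, B.label (B.run I.evalVar t) = Sum.inr (decide ((I.val 1 : Fin k).val = 0))

/-- `B` is thrifty: on every input `I`, every query `f_i(a,b)` made along the computation
path of `I` satisfies `a = v_{2i}^I` and `b = v_{2i+1}^I`. -/
def Thrifty {h : ℕ} (B : DetBP (TEVar h k) k R) : Prop :=
  ∀ (I : TEInput h k) (t i : ℕ) (hi : IsInternalNode h i) (a b : Fin k),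
    B.label (B.run I.evalVar t) = Sum.inl (TEVar.internal i hi a b) →
    a = I.val (2 * i) ∧ b = I.val (2 * i + 1)

end DetBP

/-- For a state `q` of `B` labeled with a variable `f_i(a,b)`, `RightThrifty B q i b` is the
set of `a' ∈ [k]` such that some input `I` whose computation path visits `q` satisfies
`v_{2i}^I = a'` and `v_{2i+1}^I = b`. -/
def RightThrifty {h k : ℕ} (B : DetBP (TEVar h k) k Bool) (q : Fin B.size)
    (i : ℕ) (b : Fin k) : Set (Fin k) :=
  {a' | ∃ I : TEInput h k, (∃ t : ℕ, B.run I.evalVar t = q) ∧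
    I.val (2 * i) = a' ∧ I.val (2 * i + 1) = b}

/-- For a state `q` of `B` labeled with a variable `f_i(a,b)`, `LeftThrifty B q i a` is the
set of `b' ∈ [k]` such that some input `I` whose computation path visits `q` satisfies
`v_{2i}^I = a` and `v_{2i+1}^I = b'`. -/
def LeftThrifty {h k : ℕ} (B : DetBP (TEVar h k) k Bool) (q : Fin B.size)
    (i : ℕ) (a : Fin k) : Set (Fin k) :=
  {b' | ∃ I : TEInput h k, (∃ t : ℕ, B.run I.evalVar t = q) ∧
    I.val (2 * i) = a ∧ I.val (2 * i + 1) = b'}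

/-!
The computation of an input plays a black pebbling of the tree. Just before all paths from the root
to the nodes of height two become cut, it queries such a node `u` at a state `q`, with no pebble
between `u` and the root and a pebble on each of the `h - 2` branches off that path. Following the
computation from `q`, every branch has a node that is queried only after a query of its parent has
revealed the value of its sibling. The value of this node then lies in a thrifty set of the
querying state, so that there are at most `π` candidates for it, and a single one except at the at
most `w` exceptional nodes.

Hence, given all variables but the thrifty ones of the two children of `u` and of one such node per
branch, the computation can be replayed from `q`, and at most `π ^ w` inputs with bottleneck `q` are
consistent with it. As `h` variables are left out, each state is the bottleneck of at most a
fraction `π ^ w / k ^ h` of all inputs, while every input has a bottleneck.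
-/

/-! ### Heap-numbered nodes -/

/-- Node `i` belongs to the balanced binary tree of height `h`. -/
def IsNode (h i : ℕ) : Prop := 1 ≤ i ∧ i < 2 ^ h

/-- Node `y` is an ancestor of node `i`, or `i` itself: halving the heap number moves to the
parent. -/
def IsAncestor (y i : ℕ) : Prop := ∃ d, i / 2 ^ d = y

/-- The other child of the parent of node `i`. -/
def sibling (i : ℕ) : ℕ := if i % 2 = 0 then i + 1 else i - 1

/-- The node `d` levels below the sibling of `u / 2 ^ e` on the path going left from it. For
fixed `u` and `e` these nodes form the `e`-th *branch* off the path from `u` to the root. -/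
def branchNode (u e d : ℕ) : ℕ := sibling (u / 2 ^ e) * 2 ^ d

theorem div_two_pow_div_two (u e : ℕ) : u / 2 ^ e / 2 = u / 2 ^ (e + 1) := by
  rw [pow_succ, Nat.div_div_eq_div_mul]

theorem div_two_pow_ne_of_lt {u a b : ℕ} (ha : 2 ^ a ≤ u) (hab : a < b) :
    u / 2 ^ b ≠ u / 2 ^ a := by
  obtain ⟨c, rfl⟩ := Nat.exists_eq_add_of_lt hab
  rw [add_assoc, pow_add, ← Nat.div_div_eq_div_mul]
  exact (Nat.div_lt_self (Nat.div_pos ha (by positivity)) (Nat.one_lt_two_pow (by omega))).ne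

theorem eq_of_div_two_pow_eq {u a b : ℕ} (ha : 2 ^ a ≤ u) (hb : 2 ^ b ≤ u)
    (hab : u / 2 ^ a = u / 2 ^ b) : a = b := by
  rcases lt_trichotomy a b with hlt | heq | hgt
  · exact absurd hab.symm (div_two_pow_ne_of_lt ha hlt)
  · exact heq
  · exact absurd hab (div_two_pow_ne_of_lt hb hgt)

theorem IsInternalNode.isNode_of_div_two {h i : ℕ} (hi : IsInternalNode h (i / 2)) :
    IsNode h i := by
  obtain ⟨h1, h2⟩ := hi
  cases h with
  | zero => simp at h2; omega
  | succ h => simp only [Nat.add_sub_cancel] at h2; constructor <;> omega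

namespace IsAncestor

variable {x y z i : ℕ}

protected theorem refl (i : ℕ) : IsAncestor i i := ⟨0, by simp⟩

protected theorem trans (hxy : IsAncestor x y) (hyz : IsAncestor y z) : IsAncestor x z := by
  obtain ⟨c, rfl⟩ := hyz
  obtain ⟨d, rfl⟩ := hxy
  exact ⟨c + d, by rw [pow_add, Nat.div_div_eq_div_mul]⟩

theorem div_two (i : ℕ) : IsAncestor (i / 2) i := ⟨1, by simp⟩

protected theorem le (hy : IsAncestor y i) : y ≤ i := by
  obtain ⟨d, rfl⟩ := hy
  exact Nat.div_le_self _ _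

theorem eq_or_div_two (hy : IsAncestor y i) : y = i ∨ IsAncestor y (i / 2) := by
  obtain ⟨_ | d, rfl⟩ := hy
  · simp
  · exact Or.inr ⟨d, by rw [pow_succ', Nat.div_div_eq_div_mul]⟩

theorem eq_or_exists_child (hy : IsAncestor y i) : y = i ∨ ∃ z, z / 2 = y ∧ IsAncestor z i := by
  obtain ⟨_ | d, rfl⟩ := hy
  · simp
  · exact Or.inr ⟨i / 2 ^ d, div_two_pow_div_two i d, d, rfl⟩

end IsAncestor

theorem sibling_div_two (i : ℕ) : sibling i / 2 = i / 2 := by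
  unfold sibling; split_ifs <;> omega

theorem sibling_sibling (i : ℕ) : sibling (sibling i) = i := by
  unfold sibling; split_ifs <;> omega

theorem sibling_ne (i : ℕ) : sibling i ≠ i := by
  unfold sibling; split_ifs <;> omega

theorem not_isAncestor_sibling {i : ℕ} (hi : 2 ≤ i) : ¬ IsAncestor (sibling i) i := by
  intro hanc
  rcases hanc.eq_or_div_two with heq | hanc
  · exact sibling_ne i heq
  · have := hanc.le
    have := sibling_div_two i
    omega

section Branch

variable {u e e' d d' : ℕ}

theorem branchNode_zero (u e : ℕ) : branchNode u e 0 = sibling (u / 2 ^ e) := by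
  simp [branchNode]

theorem sibling_branchNode_zero (u e : ℕ) : sibling (branchNode u e 0) = u / 2 ^ e := by
  rw [branchNode_zero, sibling_sibling]

theorem branchNode_zero_div_two (u e : ℕ) : branchNode u e 0 / 2 = u / 2 ^ (e + 1) := by
  rw [branchNode_zero, sibling_div_two, div_two_pow_div_two]

theorem branchNode_succ (u e d : ℕ) : branchNode u e (d + 1) = 2 * branchNode u e d := by
  simp only [branchNode, pow_succ]; ring

theorem branchNode_succ_div_two (u e d : ℕ) : branchNode u e (d + 1) / 2 = branchNode u e d := by
  rw [branchNode_succ]; omega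

theorem branchNode_le_of_le (u e : ℕ) (hd : d ≤ d') : branchNode u e d ≤ branchNode u e d' :=
  Nat.mul_le_mul_left _ (Nat.pow_le_pow_right two_pos hd)

theorem isAncestor_branchNode_zero (u e d : ℕ) :
    IsAncestor (branchNode u e 0) (branchNode u e d) :=
  ⟨d, by simp [branchNode]⟩

theorem not_isAncestor_branchNode (he : 2 ^ (e + 1) ≤ u) : ¬ IsAncestor (branchNode u e d) u := by
  intro hanc
  obtain ⟨c, hc⟩ := (isAncestor_branchNode_zero u e d).trans hanc
  have hparent : u / 2 ^ (c + 1) = u / 2 ^ (e + 1) := by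
    rw [← div_two_pow_div_two, hc, branchNode_zero_div_two]
  have hc1 : 2 ^ (c + 1) ≤ u :=
    (Nat.div_pos_iff.1 (hparent ▸ Nat.div_pos he (by positivity))).2
  obtain rfl : c = e := by have := eq_of_div_two_pow_eq hc1 he hparent; omega
  exact sibling_ne _ ((branchNode_zero u c).symm.trans hc.symm)

theorem branchNode_inj_of_div_two_eq (he : 2 ^ (e + 1) ≤ u) (he' : 2 ^ (e' + 1) ≤ u)
    (hparent : branchNode u e d / 2 = branchNode u e' d' / 2) : e = e' ∧ d = d' := by
  induction d generalizing d' with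
  | zero =>
    rw [branchNode_zero_div_two] at hparent
    cases d' with
    | zero =>
      rw [branchNode_zero_div_two] at hparent
      exact ⟨by have := eq_of_div_two_pow_eq he he' hparent; omega, rfl⟩
    | succ d' =>
      rw [branchNode_succ_div_two] at hparent
      exact absurd ⟨_, hparent⟩ (not_isAncestor_branchNode he')
  | succ d ih =>
    rw [branchNode_succ_div_two] at hparent
    cases d' with
    | zero =>
      rw [branchNode_zero_div_two] at hparent
      exact absurd ⟨_, hparent.symm⟩ (not_isAncestor_branchNode he)
    | succ d' =>
      rw [branchNode_succ_div_two] at hparent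
      obtain ⟨rfl, rfl⟩ := ih (congrArg (· / 2) hparent)
      exact ⟨rfl, rfl⟩

theorem branchNode_inj (he : 2 ^ (e + 1) ≤ u) (he' : 2 ^ (e' + 1) ≤ u)
    (heq : branchNode u e d = branchNode u e' d') : e = e' ∧ d = d' :=
  branchNode_inj_of_div_two_eq he he' (congrArg (· / 2) heq)

theorem branchNode_div_two_ne (he : 2 ^ (e + 1) ≤ u) : branchNode u e d / 2 ≠ u := by
  cases d with
  | zero =>
    rw [branchNode_zero_div_two]
    have : u / 2 ^ (e + 1) ≠ u / 2 ^ 0 :=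
      div_two_pow_ne_of_lt (by have := Nat.two_pow_pos (e + 1); simp; omega) (Nat.succ_pos e)
    simpa using this
  | succ d =>
    rw [branchNode_succ_div_two]
    exact fun heq => not_isAncestor_branchNode he (d := d) ⟨0, by simpa using heq.symm⟩

theorem IsAncestor.of_branchNode {y : ℕ} (hy : IsAncestor y (branchNode u e d)) :
    (∃ d' ≤ d, y = branchNode u e d') ∨ IsAncestor y (u / 2 ^ (e + 1)) := by
  induction d with
  | zero =>
    rw [← branchNode_zero_div_two]
    exact hy.eq_or_div_two.imp_left fun heq => ⟨0, le_rfl, heq⟩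
  | succ d ih =>
    rcases hy.eq_or_div_two with heq | hanc
    · exact Or.inl ⟨d + 1, le_rfl, heq⟩
    · rw [branchNode_succ_div_two] at hanc
      exact (ih hanc).imp_left fun ⟨d', hd', heq⟩ => ⟨d', by omega, heq⟩

theorem lt_of_isAncestor_branchNode {j : ℕ} (hj : 2 ^ j ≤ u) (he : 2 ^ (e + 1) ≤ u)
    (hanc : IsAncestor (u / 2 ^ j) (branchNode u e d)) : e < j := by
  rcases hanc.of_branchNode with ⟨d', -, heq⟩ | ⟨c, hc⟩
  · exact absurd ⟨j, heq⟩ (not_isAncestor_branchNode he)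
  · by_contra! hle
    refine div_two_pow_ne_of_lt hj (b := e + 1 + c) (by omega) ?_
    rw [pow_add, ← Nat.div_div_eq_div_mul, hc]

theorem branchNode_self_mem_level {n : ℕ} (he : e < n) (hu : 2 ^ n ≤ u) (hu' : u < 2 ^ (n + 1)) :
    2 ^ n ≤ branchNode u e e ∧ branchNode u e e < 2 ^ (n + 1) := by
  obtain ⟨c, rfl⟩ := Nat.exists_eq_add_of_lt he
  have hpos : 0 < 2 ^ e := by positivity
  have hsplit : 2 ^ (e + c + 1) = 2 ^ (c + 1) * 2 ^ e := by ring
  have hsplit' : 2 ^ (e + c + 1 + 1) = 2 ^ (c + 1 + 1) * 2 ^ e := by ring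
  rw [hsplit] at hu ⊢
  rw [hsplit'] at hu' ⊢
  have hlow : 2 ^ (c + 1) ≤ u / 2 ^ e := (Nat.le_div_iff_mul_le hpos).2 hu
  have hhigh : u / 2 ^ e < 2 ^ (c + 1 + 1) := (Nat.div_lt_iff_lt_mul hpos).2 hu'
  have hsib := sibling_div_two (u / 2 ^ e)
  exact ⟨Nat.mul_le_mul_right _ (by omega), Nat.mul_lt_mul_of_pos_right (by omega) hpos⟩

end Branch

/-! ### Node values -/

theorem TEVar.isNode_node {h k : ℕ} (X : TEVar h k) : IsNode h X.node := by
  cases X with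
  | internal i hi a b =>
    exact ⟨hi.1, hi.2.trans_le (Nat.pow_le_pow_right two_pos (Nat.sub_le h 1))⟩
  | leaf i hi => exact ⟨(Nat.two_pow_pos _).trans_le hi.1, hi.2⟩

namespace TEInput

variable {h k : ℕ}

theorem valAux_succ_eq (I : TEInput h k) {m i : ℕ} (hi : 2 ^ (h - 1) ≤ i * 2 ^ m) :
    I.valAux (m + 1) i = I.valAux m i := by
  induction m generalizing i with
  | zero => simp [valAux, show 2 ^ (h - 1) ≤ i by simpa using hi]
  | succ m ih =>
    by_cases hleaf : 2 ^ (h - 1) ≤ i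
    · simp [valAux, hleaf]
    · have hleft := ih (i := 2 * i) (hi.trans_eq (by ring))
      have hright := ih (i := 2 * i + 1) <|
        hi.trans (by rw [pow_succ']; nlinarith [Nat.two_pow_pos m])
      rw [valAux, if_neg hleaf, hleft, hright]
      conv_rhs => rw [valAux, if_neg hleaf]

theorem val_leaf (I : TEInput h k) {i : ℕ} (hi : 2 ^ (h - 1) ≤ i) : I.val i = I.leaf i := by
  cases h with
  | zero => rfl
  | succ m => rw [val, valAux, if_pos hi]

theorem val_internal (I : TEInput h k) {i : ℕ} (hi : IsInternalNode h i) :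
    I.val i = I.f i (I.val (2 * i)) (I.val (2 * i + 1)) := by
  obtain ⟨hpos, hlt⟩ := hi
  cases h with
  | zero => simp at hlt; omega
  | succ m =>
    have hm : 0 < 2 ^ m := by positivity
    unfold val
    rw [I.valAux_succ_eq (i := 2 * i) (by simp only [Nat.add_sub_cancel]; nlinarith),
      I.valAux_succ_eq (i := 2 * i + 1) (by simp only [Nat.add_sub_cancel]; nlinarith),
      valAux, if_neg hlt.not_ge]

theorem val_congr {I J : TEInput h k} {y : ℕ} (hy : IsNode h y)
    (hIJ : ∀ X : TEVar h k, IsAncestor y X.node → I.evalVar X = J.evalVar X) :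
    I.val y = J.val y := by
  rcases le_or_gt (2 ^ (h - 1)) y with hleaf | hint
  · rw [I.val_leaf hleaf, J.val_leaf hleaf]
    exact hIJ (.leaf y ⟨hleaf, hy.2⟩) (IsAncestor.refl y)
  · have hi : IsInternalNode h y := ⟨hy.1, hint⟩
    have hchild : ∀ z, z / 2 = y → I.val z = J.val z := fun z hz =>
      val_congr (IsInternalNode.isNode_of_div_two (hz ▸ hi)) fun X hX =>
        hIJ X (hz ▸ (IsAncestor.div_two z).trans hX)
    rw [I.val_internal hi, J.val_internal hi, hchild (2 * y) (by omega),
      hchild (2 * y + 1) (by omega)]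
    exact hIJ (.internal y hi _ _) (IsAncestor.refl y)
termination_by 2 ^ h - y
decreasing_by have := hy.1; have := hy.2; omega

/-- The input obtained from `I` by giving the thrifty variables of the nodes `i ∈ S` the
values `v i`. -/
def setThrifty (I : TEInput h k) (S : Finset ℕ) (v : ℕ → Fin k) : TEInput h k where
  f i a b := if i ∈ S ∧ a = I.val (2 * i) ∧ b = I.val (2 * i + 1) then v i else I.f i a b
  leaf i := if i ∈ S then v i else I.leaf i

open Classical in
/-- The input with prescribed variables; its entries outside the tree are set to `0`. -/
noncomputable def ofVars [NeZero k] (x : TEVar h k → Fin k) : TEInput h k where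
  f i a b := if hi : IsInternalNode h i then x (.internal i hi a b) else 0
  leaf i := if hi : IsLeafNode h i then x (.leaf i hi) else 0

@[simp]
theorem evalVar_ofVars [NeZero k] (x : TEVar h k → Fin k) : (ofVars x).evalVar = x := by
  funext X
  cases X with
  | internal i hi a b => exact dif_pos hi
  | leaf i hi => exact dif_pos hi

end TEInput

namespace IsThriftyVarOf

variable {h k : ℕ} {I J : TEInput h k} {i : ℕ} {X : TEVar h k}

theorem node_eq (hX : IsThriftyVarOf I i X) : X.node = i := by
  cases X with
  | internal j hj a b => exact hX.1
  | leaf j hj => exact hX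

theorem evalVar_eq (hX : IsThriftyVarOf I i X) : I.evalVar X = I.val i := by
  cases X with
  | internal j hj a b =>
    obtain ⟨rfl, rfl, rfl⟩ := hX
    exact (I.val_internal hj).symm
  | leaf j hj =>
    obtain rfl : j = i := hX
    exact (I.val_leaf hj.1).symm

theorem congr (hX : IsThriftyVarOf I i X)
    (hIJ : ∀ y, IsNode h y → y / 2 = i → I.val y = J.val y) : IsThriftyVarOf J i X := by
  cases X with
  | internal j hj a b =>
    obtain ⟨rfl, rfl, rfl⟩ := hX
    have hchild : ∀ y, y / 2 = j → I.val y = J.val y := fun y hy =>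
      hIJ y (IsInternalNode.isNode_of_div_two (hy ▸ hj)) hy
    exact ⟨rfl, hchild _ (by omega), hchild _ (by omega)⟩
  | leaf j hj => exact hX

end IsThriftyVarOf

namespace TEInput

variable {h k : ℕ}

theorem exists_isThriftyVarOf (I : TEInput h k) {i : ℕ} (hi : IsNode h i) :
    ∃ X, IsThriftyVarOf I i X := by
  rcases le_or_gt (2 ^ (h - 1)) i with hleaf | hint
  · exact ⟨.leaf i ⟨hleaf, hi.2⟩, rfl⟩
  · exact ⟨.internal i ⟨hi.1, hint⟩ _ _, rfl, rfl, rfl⟩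

theorem evalVar_setThrifty_of_not (I : TEInput h k) {S : Finset ℕ} (v : ℕ → Fin k)
    {X : TEVar h k} (hX : ∀ i ∈ S, ¬ IsThriftyVarOf I i X) :
    (I.setThrifty S v).evalVar X = I.evalVar X := by
  cases X with
  | internal i hi a b => exact if_neg fun ⟨hS, ha, hb⟩ => hX i hS ⟨rfl, ha, hb⟩
  | leaf i hi => exact if_neg fun hS => hX i hS rfl

theorem evalVar_setThrifty (I : TEInput h k) {S : Finset ℕ} (v : ℕ → Fin k) {i : ℕ} (hi : i ∈ S)
    {X : TEVar h k} (hX : IsThriftyVarOf I i X) : (I.setThrifty S v).evalVar X = v i := by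
  cases X with
  | internal j hj a b =>
    obtain ⟨rfl, ha, hb⟩ := hX
    exact if_pos ⟨hi, ha, hb⟩
  | leaf j hj =>
    obtain rfl : j = i := hX
    exact if_pos hi

theorem val_setThrifty_of_not_isAncestor (I : TEInput h k) {x y : ℕ} (v : ℕ → Fin k)
    (hy : IsNode h y) (hyx : ¬ IsAncestor y x) : (I.setThrifty {x} v).val y = I.val y :=
  val_congr hy fun X hX => I.evalVar_setThrifty_of_not v fun i hi hXi => by
    rw [Finset.mem_singleton.1 hi] at hXi
    exact hyx (hXi.node_eq ▸ hX)

theorem val_setThrifty (I : TEInput h k) {x : ℕ} (v : ℕ → Fin k) (hx : IsNode h x) :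
    (I.setThrifty {x} v).val x = v x := by
  obtain ⟨X, hX⟩ := I.exists_isThriftyVarOf hx
  have hX' : IsThriftyVarOf (I.setThrifty {x} v) x X := hX.congr fun y hy hyx =>
    (I.val_setThrifty_of_not_isAncestor v hy fun hanc => by
      have := hanc.le
      have := hy.1
      have := hx.1
      omega).symm
  rw [← hX'.evalVar_eq, I.evalVar_setThrifty v (Finset.mem_singleton_self x) hX]

end TEInput

/-! ### Computation paths -/

namespace DetBP

section Path

variable {V : Type} {k : ℕ} {R : Type} {B : DetBP V k R}

/-- The state reached from `q` after `n` steps of computation on `x`. -/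
def runFrom (B : DetBP V k R) (x : V → Fin k) (q : Fin B.size) (n : ℕ) : Fin B.size :=
  (B.step x)^[n] q

theorem runFrom_succ (x : V → Fin k) (q : Fin B.size) (n : ℕ) :
    B.runFrom x q (n + 1) = B.step x (B.runFrom x q n) :=
  Function.iterate_succ_apply' _ _ _

theorem runFrom_run (x : V → Fin k) (t n : ℕ) :
    B.runFrom x (B.run x t) n = B.run x (t + n) := by
  rw [runFrom, run, ← Function.iterate_add_apply, Nat.add_comm]; rfl

theorem runFrom_congr {x y : V → Fin k} {q : Fin B.size} {n : ℕ}
    (hxy : ∀ m < n, ∀ v, B.label (B.runFrom x q m) = Sum.inl v →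
      B.runFrom x q m = B.runFrom y q m → x v = y v) :
    B.runFrom x q n = B.runFrom y q n := by
  induction n with
  | zero => rfl
  | succ n ih =>
    have ih := ih fun m hm => hxy m (hm.trans (Nat.lt_succ_self n))
    have hlast := fun v hv => hxy n (Nat.lt_succ_self n) v hv ih
    rw [runFrom_succ, runFrom_succ, ← ih]
    unfold step
    split
    case h_1 v hv => rw [hlast v hv]
    case h_2 => rfl

theorem run_eq_of_label_eq_inr {x : V → Fin k} {t s : ℕ} {r : R}
    (ht : B.label (B.run x t) = Sum.inr r) (hts : t ≤ s) : B.run x s = B.run x t := by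
  obtain ⟨n, rfl⟩ := Nat.exists_eq_add_of_le hts
  rw [← runFrom_run]
  exact Function.iterate_fixed (by rw [step, ht]) n

theorem output_unique {x : V → Fin k} {t s : ℕ} {r r' : R}
    (ht : B.label (B.run x t) = Sum.inr r) (hs : B.label (B.run x s) = Sum.inr r') : r = r' := by
  rcases le_total t s with hts | hst
  · rw [run_eq_of_label_eq_inr ht hts, ht] at hs
    exact Sum.inr.inj hs
  · rw [run_eq_of_label_eq_inr hs hst, hs] at ht
    exact (Sum.inr.inj ht).symm

end Path

section Queries

variable {h k : ℕ} {R : Type} {B : DetBP (TEVar h k) k R} {I J : TEInput h k} {q : Fin B.size}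
  {x y n n' : ℕ}

/-- The state `q` queries the thrifty variable of node `x` of input `I`. -/
def Queries (B : DetBP (TEVar h k) k R) (I : TEInput h k) (q : Fin B.size) (x : ℕ) : Prop :=
  ∃ X, B.label q = Sum.inl X ∧ IsThriftyVarOf I x X

/-- The computation of `I` from `q` queries the thrifty variable of node `x` within its first `n`
states. -/
def QueriedBefore (B : DetBP (TEVar h k) k R) (I : TEInput h k) (q : Fin B.size) (x n : ℕ) :
    Prop := ∃ m < n, B.Queries I (B.runFrom I.evalVar q m) x

/-- The state `q` queries the parent of node `x` at arguments one of which is the correct value of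
the sibling of `x`. On reaching `q`, one thus knows the value of that sibling. -/
def Reveals (B : DetBP (TEVar h k) k R) (I : TEInput h k) (q : Fin B.size) (x : ℕ) : Prop :=
  ∃ hi a b, B.label q = Sum.inl (TEVar.internal (x / 2) hi a b) ∧
    (if x % 2 = 0 then b else a) = I.val (sibling x)

theorem Queries.node_unique (hx : B.Queries I q x) (hy : B.Queries J q y) : x = y := by
  obtain ⟨X, hX, hXx⟩ := hx
  obtain ⟨Y, hY, hYy⟩ := hy
  obtain rfl := Sum.inl.inj (hX.symm.trans hY)
  exact hXx.node_eq.symm.trans hYy.node_eq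

theorem Queries.congr (hx : B.Queries I q x)
    (hIJ : ∀ y, IsNode h y → y / 2 = x → I.val y = J.val y) : B.Queries J q x := by
  obtain ⟨X, hX, hXx⟩ := hx
  exact ⟨X, hX, hXx.congr hIJ⟩

theorem Queries.exists_internal (hx : B.Queries I q x) (hlt : x < 2 ^ (h - 1)) :
    ∃ hi, B.label q = Sum.inl (.internal x hi (I.val (2 * x)) (I.val (2 * x + 1))) := by
  obtain ⟨X, hX, hXx⟩ := hx
  cases X with
  | internal i hi a b =>
    obtain ⟨rfl, rfl, rfl⟩ := hXx
    exact ⟨hi, hX⟩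
  | leaf i hi =>
    obtain rfl : i = x := hXx
    exact absurd hlt hi.1.not_gt

theorem Queries.reveals (hlt : x / 2 < 2 ^ (h - 1)) (hx : B.Queries I q (x / 2)) :
    B.Reveals I q x := by
  obtain ⟨hi, hX⟩ := hx.exists_internal hlt
  refine ⟨hi, _, _, hX, ?_⟩
  unfold sibling
  split_ifs with hp <;> congr 1 <;> omega

theorem Reveals.isInternalNode_div_two (hx : B.Reveals I q x) : IsInternalNode h (x / 2) :=
  hx.choose

theorem Reveals.isNode (hx : B.Reveals I q x) : IsNode h x :=
  hx.isInternalNode_div_two.isNode_of_div_two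

theorem Reveals.parent_unique (hx : B.Reveals I q x) (hy : B.Reveals J q y) :
    x / 2 = y / 2 := by
  obtain ⟨hi, a, b, hX, -⟩ := hx
  obtain ⟨hi', a', b', hY, -⟩ := hy
  injection Sum.inl.inj (hX.symm.trans hY)

theorem Reveals.congr (hx : B.Reveals I q x) (hIJ : I.val (sibling x) = J.val (sibling x)) :
    B.Reveals J q x := by
  obtain ⟨hi, a, b, hX, hab⟩ := hx
  exact ⟨hi, a, b, hX, hab.trans hIJ⟩

theorem QueriedBefore.mono (hx : B.QueriedBefore I q x n) (hn : n ≤ n') :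
    B.QueriedBefore I q x n' := by
  obtain ⟨m, hm, hq⟩ := hx
  exact ⟨m, hm.trans_le hn, hq⟩

theorem queriedBefore_succ :
    B.QueriedBefore I q x (n + 1) ↔
      B.Queries I q x ∨ B.QueriedBefore I (B.step I.evalVar q) x n := by
  constructor
  · rintro ⟨_ | m, hm, hq⟩
    · exact Or.inl hq
    · exact Or.inr ⟨m, by omega, hq⟩
  · rintro (hq | ⟨m, hm, hq⟩)
    · exact ⟨0, n.succ_pos, hq⟩
    · exact ⟨m + 1, by omega, hq⟩

theorem run_setThrifty {t : ℕ} (v : ℕ → Fin k) (hx : ¬ B.QueriedBefore I B.start x t) :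
    B.run (I.setThrifty {x} v).evalVar t = B.run I.evalVar t := by
  refine (runFrom_congr (q := B.start) fun m hm X hX _ => ?_).symm
  refine (I.evalVar_setThrifty_of_not v fun i hi hXi => ?_).symm
  rw [Finset.mem_singleton.1 hi] at hXi
  exact hx ⟨m, hm, X, hX, hXi⟩

end Queries

end DetBP

section Thrifty

variable {h k : ℕ} {B : DetBP (TEVar h k) k Bool} {I : TEInput h k} {q : Fin B.size} {x p : ℕ}

/-- The possible values of node `x` on reaching `q` when the sibling of `x` has value `v`. If `q`
queries the parent of `x`, this is the left or the right thrifty set of `q`. -/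
def candidates (B : DetBP (TEVar h k) k Bool) (q : Fin B.size) (x : ℕ) (v : Fin k) :
    Set (Fin k) :=
  {c | ∃ I : TEInput h k, (∃ t, B.run I.evalVar t = q) ∧ I.val x = c ∧ I.val (sibling x) = v}

/-- The state `q` queries the internal node `i` without being thrifty: one of its two thrifty sets
has more than one element. -/
def IsExceptionalAt (B : DetBP (TEVar h k) k Bool) (q : Fin B.size) (i : ℕ) : Prop :=
  ∃ (hi : IsInternalNode h i) (a b : Fin k), B.label q = Sum.inl (.internal i hi a b) ∧
    (1 < (RightThrifty B q i b).ncard ∨ 1 < (LeftThrifty B q i a).ncard)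

/-- The nodes at which the computation path of `I` is not thrifty. -/
def exceptionalNodes (B : DetBP (TEVar h k) k Bool) (I : TEInput h k) : Set ℕ :=
  {i | ∃ t, IsExceptionalAt B (B.run I.evalVar t) i}

/-- All thrifty sets of `B` have at most `p` elements. -/
def ThriftyBound (B : DetBP (TEVar h k) k Bool) (p : ℕ) : Prop :=
  ∀ (q : Fin B.size) (i : ℕ) (hi : IsInternalNode h i) (a b : Fin k),
    B.label q = Sum.inl (.internal i hi a b) →
    (LeftThrifty B q i a).ncard ≤ p ∧ (RightThrifty B q i b).ncard ≤ p

theorem candidates_eq_rightThrifty (hx : x % 2 = 0) (v : Fin k) :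
    candidates B q x v = RightThrifty B q (x / 2) v := by
  have hleft : 2 * (x / 2) = x := by omega
  simp only [candidates, RightThrifty, sibling, hleft, if_pos hx]

theorem candidates_eq_leftThrifty (hx : x % 2 = 1) (v : Fin k) :
    candidates B q x v = LeftThrifty B q (x / 2) v := by
  have hleft : 2 * (x / 2) = x - 1 := by omega
  have hright : x - 1 + 1 = x := by omega
  simp only [candidates, LeftThrifty, sibling, hleft, hright, if_neg (by omega : ¬ x % 2 = 0)]
  exact Set.ext fun c => exists_congr fun I => and_congr_right' and_comm

theorem DetBP.Reveals.exists_thriftySet (hx : B.Reveals I q x) :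
    ∃ (hi : IsInternalNode h (x / 2)) (a b : Fin k),
      B.label q = Sum.inl (.internal (x / 2) hi a b) ∧
      (candidates B q x (I.val (sibling x)) = RightThrifty B q (x / 2) b ∨
        candidates B q x (I.val (sibling x)) = LeftThrifty B q (x / 2) a) := by
  obtain ⟨hi, a, b, hX, hab⟩ := hx
  refine ⟨hi, a, b, hX, ?_⟩
  rw [← hab]
  rcases Nat.mod_two_eq_zero_or_one x with hp | hp
  · exact Or.inl (by rw [if_pos hp, candidates_eq_rightThrifty hp])
  · exact Or.inr (by rw [if_neg (by omega), candidates_eq_leftThrifty hp])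

theorem DetBP.Reveals.candidates_ncard_le (hx : B.Reveals I q x) (hp : ThriftyBound B p) :
    (candidates B q x (I.val (sibling x))).ncard ≤ p := by
  obtain ⟨hi, a, b, hX, heq | heq⟩ := hx.exists_thriftySet <;> rw [heq]
  · exact (hp q _ hi a b hX).2
  · exact (hp q _ hi a b hX).1

theorem DetBP.Reveals.candidates_ncard_le_one (hx : B.Reveals I q x)
    (hq : ¬ IsExceptionalAt B q (x / 2)) :
    (candidates B q x (I.val (sibling x))).ncard ≤ 1 := by
  obtain ⟨hi, a, b, hX, heq⟩ := hx.exists_thriftySet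
  by_contra! hlt
  exact hq ⟨hi, a, b, hX, heq.imp (fun heq => by rwa [← heq]) (fun heq => by rwa [← heq])⟩

-- Otherwise changing the value of the root would not change the output.
theorem exists_queries_root (hk : 2 ≤ k) (hh : 1 ≤ h) (hB : B.SolvesBT) (I : TEInput h k) :
    ∃ t, B.Queries I (B.run I.evalVar t) 1 := by
  by_contra! hno
  have hroot : IsNode h 1 := ⟨le_rfl, Nat.one_lt_two_pow (by omega)⟩
  have hout : ∀ v : Fin k, decide (v.val = 0) = decide ((I.val 1).val = 0) := by
    intro v
    obtain ⟨t, ht⟩ := hB (I.setThrifty {1} fun _ => v)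
    obtain ⟨s, hs⟩ := hB I
    rw [I.val_setThrifty _ hroot, DetBP.run_setThrifty _ fun ⟨m, _, hq⟩ => hno m hq] at ht
    exact DetBP.output_unique ht hs
  have := (hout ⟨0, by omega⟩).trans (hout ⟨1, by omega⟩).symm
  simp at this

-- Otherwise the child can take all `k` values without affecting the query of its parent.
theorem DetBP.Queries.queriedBefore_child (hpk : p < k) (hp : ThriftyBound B p) {t c : ℕ}
    (hc : c / 2 < 2 ^ (h - 1)) (ht : B.Queries I (B.run I.evalVar t) (c / 2)) :
    B.QueriedBefore I B.start c t := by
  by_contra hno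
  have hrev := ht.reveals hc
  have hc2 : 2 ≤ c := by have := hrev.isInternalNode_div_two.1; omega
  have hsib : IsNode h (sibling c) := IsInternalNode.isNode_of_div_two <| by
    rw [sibling_div_two]; exact hrev.isInternalNode_div_two
  have huniv : candidates B (B.run I.evalVar t) c (I.val (sibling c)) = Set.univ :=
    Set.eq_univ_of_forall fun v => ⟨I.setThrifty {c} fun _ => v, ⟨t, run_setThrifty _ hno⟩,
      I.val_setThrifty _ hrev.isNode,
      I.val_setThrifty_of_not_isAncestor _ hsib (not_isAncestor_sibling hc2)⟩
  have hle := hrev.candidates_ncard_le hp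
  rw [huniv, Set.ncard_univ, Nat.card_eq_fintype_card, Fintype.card_fin] at hle
  omega

end Thrifty

/-! ### The bottleneck state of an input -/

/-- From the state `q`, the computation of `I` queries the parent of node `x` before `x` itself.
In the black pebbling of the tree played by the computation, `x` then carries a pebble at `q`. -/
def Pebbled {h k : ℕ} {R : Type} (B : DetBP (TEVar h k) k R) (I : TEInput h k) (q : Fin B.size)
    (x : ℕ) : Prop :=
  ∃ n, B.Queries I (B.runFrom I.evalVar q n) (x / 2) ∧ ¬ B.QueriedBefore I q x n

/-- At time `t`, every path from the root to a node of height two is cut: either the root has been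
queried, or the path contains a pebble. -/
def IsCut {n k : ℕ} {R : Type} (B : DetBP (TEVar (n + 2) k) k R) (I : TEInput (n + 2) k)
    (t : ℕ) : Prop :=
  B.QueriedBefore I B.start 1 t ∨ ∀ v, 2 ^ n ≤ v → v < 2 ^ (n + 1) →
    ∃ y, IsAncestor y v ∧ Pebbled B I (B.run I.evalVar t) y

/-- Input `I` passes through the state `q`, which queries a node `u` of height two, when no pebble
lies on the path from `u` to the root but there is one on each of the `n` branches off that
path. -/
structure Bottleneck {n k : ℕ} {R : Type} (B : DetBP (TEVar (n + 2) k) k R)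
    (I : TEInput (n + 2) k) (q : Fin B.size) (u : ℕ) : Prop where
  visits : ∃ t, B.run I.evalVar t = q
  two_pow_le : 2 ^ n ≤ u
  lt_two_pow : u < 2 ^ (n + 1)
  queries : B.Queries I q u
  not_pebbled : ∀ y, IsAncestor y u → ¬ Pebbled B I q y
  pebbled : ∀ e < n, ∃ d, branchNode u e d < 2 ^ (n + 2) ∧ Pebbled B I q (branchNode u e d)

section Pebbling

variable {h n k p u x t : ℕ}

theorem Pebbled.of_step {R : Type} {B : DetBP (TEVar h k) k R} {I : TEInput h k} {q : Fin B.size}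
    (hx : Pebbled B I (B.step I.evalVar q) x) (hq : ¬ B.Queries I q x) : Pebbled B I q x := by
  obtain ⟨m, hm, hno⟩ := hx
  exact ⟨m + 1, hm, fun hbefore => (DetBP.queriedBefore_succ.1 hbefore).elim hq hno⟩

theorem pebbled_of_queries {R : Type} {B : DetBP (TEVar h k) k R} {I : TEInput h k}
    {q : Fin B.size} (hx : B.Queries I q (x / 2)) : Pebbled B I q x :=
  ⟨0, hx, fun ⟨_, hm, _⟩ => absurd hm (Nat.not_lt_zero _)⟩

theorem not_pebbled_start {B : DetBP (TEVar h k) k Bool} (hpk : p < k) (hp : ThriftyBound B p)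
    (I : TEInput h k) (hx : x / 2 < 2 ^ (h - 1)) : ¬ Pebbled B I B.start x :=
  fun ⟨_, hm, hno⟩ => hno (DetBP.Queries.queriedBefore_child hpk hp hx hm)

theorem isAncestor_one (hu : 1 ≤ u) : IsAncestor 1 u := by
  induction u using Nat.strong_induction_on with
  | h u ih =>
    rcases Nat.eq_or_lt_of_le hu with rfl | hlt
    · exact IsAncestor.refl 1
    · exact (ih (u / 2) (by omega) (by omega)).trans (IsAncestor.div_two u)

theorem exists_not_isCut_isCut_succ {B : DetBP (TEVar (n + 2) k) k Bool} (hk : 2 ≤ k)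
    (hpk : p < k) (hB : B.SolvesBT) (hp : ThriftyBound B p) (I : TEInput (n + 2) k) :
    ∃ t, ¬ IsCut B I t ∧ IsCut B I (t + 1) := by
  refine Nat.exists_not_and_succ_of_not_zero_of_exists ?_ ?_
  · rintro (⟨_, hm, _⟩ | hcut)
    · exact absurd hm (Nat.not_lt_zero _)
    · obtain ⟨y, hy, hpebble⟩ := hcut (2 ^ n) le_rfl (Nat.pow_lt_pow_succ one_lt_two)
      have hlt : y / 2 < 2 ^ (n + 1) :=
        (Nat.div_le_self y 2).trans_lt (hy.le.trans_lt (Nat.pow_lt_pow_succ one_lt_two))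
      exact not_pebbled_start hpk hp I hlt hpebble
  · obtain ⟨t, ht⟩ := exists_queries_root hk (by omega) hB I
    exact ⟨t + 1, Or.inl ⟨t, t.lt_succ_self, ht⟩⟩

section Cut

variable {R : Type} {B : DetBP (TEVar (n + 2) k) k R} {I : TEInput (n + 2) k}

theorem IsCut.exists_queries_or_pebbled (hcut : IsCut B I (t + 1))
    (hroot : ¬ B.QueriedBefore I B.start 1 t) {v : ℕ} (hv : 2 ^ n ≤ v) (hv' : v < 2 ^ (n + 1)) :
    ∃ y, IsAncestor y v ∧
      (B.Queries I (B.run I.evalVar t) y ∨ Pebbled B I (B.run I.evalVar t) y) := by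
  rcases hcut with ⟨m, hm, hq⟩ | hcut
  · refine ⟨1, isAncestor_one (Nat.one_le_two_pow.trans hv), Or.inl ?_⟩
    rcases Nat.lt_succ_iff_lt_or_eq.1 hm with hlt | rfl
    · exact absurd ⟨m, hlt, hq⟩ hroot
    · exact hq
  · obtain ⟨y, hyv, hy⟩ := hcut v hv hv'
    rw [← DetBP.runFrom_run] at hy
    exact ⟨y, hyv, or_iff_not_imp_left.2 hy.of_step⟩

theorem IsCut.queries (hcut : IsCut B I (t + 1)) (hroot : ¬ B.QueriedBefore I B.start 1 t)
    (hu : 2 ^ n ≤ u) (hu' : u < 2 ^ (n + 1))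
    (hnp : ∀ y, IsAncestor y u → ¬ Pebbled B I (B.run I.evalVar t) y) :
    B.Queries I (B.run I.evalVar t) u := by
  obtain ⟨y, hyu, hy⟩ := hcut.exists_queries_or_pebbled hroot hu hu'
  have hq := hy.resolve_right (hnp y hyu)
  rcases hyu.eq_or_exists_child with rfl | ⟨z, rfl, hzu⟩
  · exact hq
  · exact absurd (pebbled_of_queries hq) (hnp z hzu)

theorem IsCut.pebbled (hcut : IsCut B I (t + 1)) (hroot : ¬ B.QueriedBefore I B.start 1 t)
    (hu : 2 ^ n ≤ u) (hu' : u < 2 ^ (n + 1))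
    (hnp : ∀ y, IsAncestor y u → ¬ Pebbled B I (B.run I.evalVar t) y) {e : ℕ} (he : e < n) :
    ∃ d, branchNode u e d < 2 ^ (n + 2) ∧
      Pebbled B I (B.run I.evalVar t) (branchNode u e d) := by
  have he' : 2 ^ (e + 1) ≤ u := (Nat.pow_le_pow_right two_pos he).trans hu
  have hq := hcut.queries hroot hu hu' hnp
  obtain ⟨hlow, hhigh⟩ := branchNode_self_mem_level he hu hu'
  obtain ⟨y, hyv, hy⟩ := hcut.exists_queries_or_pebbled hroot hlow hhigh
  rcases hyv.of_branchNode with ⟨d, -, rfl⟩ | hspine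
  · refine ⟨d, hyv.le.trans_lt (hhigh.trans (Nat.pow_lt_pow_succ one_lt_two)),
      hy.resolve_left fun hqy => not_isAncestor_branchNode he' (d := d) ⟨0, ?_⟩⟩
    simpa using hq.node_unique hqy
  · have hlt : y < u := hspine.le.trans_lt
      (Nat.div_lt_self ((Nat.two_pow_pos n).trans_le hu) (Nat.one_lt_two_pow (by omega)))
    exact (hy.elim (fun hqy => hlt.ne (hqy.node_unique hq))
      (hnp y (hspine.trans ⟨e + 1, rfl⟩))).elim

end Cut

theorem exists_bottleneck {B : DetBP (TEVar (n + 2) k) k Bool} (hk : 2 ≤ k)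
    (hpk : p < k) (hB : B.SolvesBT) (hp : ThriftyBound B p) (I : TEInput (n + 2) k) :
    ∃ q u, Bottleneck B I q u := by
  obtain ⟨t, hnot, hcut⟩ := exists_not_isCut_isCut_succ hk hpk hB hp I
  simp only [IsCut, not_or, not_forall, not_exists, not_and] at hnot
  obtain ⟨hroot, u, hu, hu', hnp⟩ := hnot
  exact ⟨_, u, ⟨t, rfl⟩, hu, hu', hcut.queries hroot hu hu' hnp, hnp, fun e he =>
    hcut.pebbled hroot hu hu' hnp he⟩

end Pebbling

/-! ### Learning a node on each branch -/

/-- After `t` steps from `q`, the computation of `I` reveals the value of the sibling of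
`branchNode u e d` before querying `branchNode u e d` itself. If that sibling is on the path from
`u` to the root, then it has been queried itself. -/
structure Learns {h k : ℕ} {R : Type} (B : DetBP (TEVar h k) k R) (I : TEInput h k)
    (q : Fin B.size) (u e d t : ℕ) : Prop where
  reveals : B.Reveals I (B.runFrom I.evalVar q t) (branchNode u e d)
  not_queriedBefore : ¬ B.QueriedBefore I q (branchNode u e d) t
  queriedBefore_sibling : d = 0 → B.QueriedBefore I q (u / 2 ^ e) t

/-- The first time after `q` at which `I` learns a node of the `e`-th branch; it is `0` if there is
no such time. -/
noncomputable def learnTime {h k : ℕ} {R : Type} (B : DetBP (TEVar h k) k R) (I : TEInput h k)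
    (q : Fin B.size) (u e : ℕ) : ℕ :=
  sInf {t | ∃ d, Learns B I q u e d t}

/-- The depth on the `e`-th branch of the node first learned by `I` after `q`; it is `0` if there is
no such node. -/
noncomputable def learnDepth {h k : ℕ} {R : Type} (B : DetBP (TEVar h k) k R) (I : TEInput h k)
    (q : Fin B.size) (u e : ℕ) : ℕ :=
  sInf {d | Learns B I q u e d (learnTime B I q u e)}

section Learning

variable {n h k : ℕ} {R : Type} {u e d t T : ℕ}

theorem Learns.learnTime_le {B : DetBP (TEVar h k) k R} {I : TEInput h k} {q : Fin B.size}
    (hL : Learns B I q u e d t) : learnTime B I q u e ≤ t :=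
  Nat.sInf_le ⟨d, hL⟩

theorem Learns.depth_unique {B : DetBP (TEVar h k) k R} {I J : TEInput h k} {q : Fin B.size}
    {d' t' : ℕ} (he : 2 ^ (e + 1) ≤ u) (hI : Learns B I q u e d t) (hJ : Learns B J q u e d' t')
    (hstate : B.runFrom I.evalVar q t = B.runFrom J.evalVar q t') : d = d' :=
  (branchNode_inj_of_div_two_eq he he
    (hI.reveals.parent_unique (hstate ▸ hJ.reveals))).2

variable {B : DetBP (TEVar (n + 2) k) k R} {I : TEInput (n + 2) k} {q : Fin B.size}

namespace Bottleneck

theorem two_pow_succ_le (hI : Bottleneck B I q u) (he : e < n) : 2 ^ (e + 1) ≤ u :=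
  (Nat.pow_le_pow_right two_pos he).trans hI.two_pow_le

theorem queriedBefore_spine (hI : Bottleneck B I q u)
    (hq : B.Queries I (B.runFrom I.evalVar q t) (u / 2 ^ (e + 1))) :
    B.QueriedBefore I q (u / 2 ^ e) t :=
  of_not_not fun hno =>
    hI.not_pebbled (u / 2 ^ e) ⟨e, rfl⟩ ⟨t, (div_two_pow_div_two u e).symm ▸ hq, hno⟩

theorem learns_of_queries_div_two (hI : Bottleneck B I q u) (hd : branchNode u e d < 2 ^ (n + 2))
    (hq : B.Queries I (B.runFrom I.evalVar q t) (branchNode u e d / 2))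
    (hno : ¬ B.QueriedBefore I q (branchNode u e d) t) : Learns B I q u e d t where
  reveals := hq.reveals (Nat.div_lt_of_lt_mul (hd.trans_eq (pow_succ' _ _)))
  not_queriedBefore := hno
  queriedBefore_sibling := by
    rintro rfl
    rw [branchNode_zero_div_two] at hq
    exact hI.queriedBefore_spine hq

theorem queriedBefore_branchNode (hI : Bottleneck B I q u)
    (hno : ∀ t < T, ∀ d, ¬ Learns B I q u e d t) (hd : branchNode u e d < 2 ^ (n + 2))
    (hparent : B.QueriedBefore I q (branchNode u e d / 2) T) :
    B.QueriedBefore I q (branchNode u e d) T := by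
  obtain ⟨t, ht, hq⟩ := hparent
  by_contra hbr
  exact hno t ht d (hI.learns_of_queries_div_two hd hq fun hbr' => hbr (hbr'.mono ht.le))

theorem queriedBefore_branchNode_of_le (hI : Bottleneck B I q u) {m : ℕ} (hm : m ≤ d)
    (hno : ∀ t < T, ∀ d, ¬ Learns B I q u e d t) (hd : branchNode u e d < 2 ^ (n + 2))
    (hq : B.QueriedBefore I q (branchNode u e m) T) :
    B.QueriedBefore I q (branchNode u e d) T := by
  induction d, hm using Nat.le_induction with
  | base => exact hq
  | succ d _ ih =>
    refine hI.queriedBefore_branchNode hno hd ?_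
    rw [branchNode_succ_div_two]
    exact ih ((branchNode_le_of_le u e d.le_succ).trans_lt hd)

theorem exists_learns_of_queriedBefore_succ (hI : Bottleneck B I q u) (he : e < n)
    (hroot : B.QueriedBefore I q (u / 2 ^ (e + 1)) T) : ∃ t < T, ∃ d, Learns B I q u e d t := by
  by_contra! hno
  obtain ⟨d, hd, t, hq, hfresh⟩ := hI.pebbled e he
  have hzero : B.QueriedBefore I q (branchNode u e 0) T :=
    hI.queriedBefore_branchNode hno ((branchNode_le_of_le u e d.zero_le).trans_lt hd)
      (branchNode_zero_div_two u e ▸ hroot)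
  have hbr := hI.queriedBefore_branchNode_of_le d.zero_le hno hd hzero
  rcases lt_or_ge t T with hlt | hge
  · exact hno t hlt d (hI.learns_of_queries_div_two hd hq hfresh)
  · exact hfresh (hbr.mono hge)

theorem exists_learns_of_queriedBefore (hI : Bottleneck B I q u) {j : ℕ} (he : e < n) (hj : e < j)
    (hroot : B.QueriedBefore I q (u / 2 ^ j) T) : ∃ t < T, ∃ d, Learns B I q u e d t := by
  induction j, hj using Nat.le_induction with
  | base => exact hI.exists_learns_of_queriedBefore_succ he hroot
  | succ j _ ih =>
    obtain ⟨t, ht, hq⟩ := hroot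
    exact ih ((hI.queriedBefore_spine hq).mono ht.le)

theorem learns (hI : Bottleneck B I q u) (he : e < n) :
    Learns B I q u e (learnDepth B I q u e) (learnTime B I q u e) := by
  obtain ⟨d, hd, t, hq, hno⟩ := hI.pebbled e he
  have htime : ∃ d, Learns B I q u e d (learnTime B I q u e) :=
    Nat.sInf_mem (s := {t | ∃ d, Learns B I q u e d t})
      ⟨t, d, hI.learns_of_queries_div_two hd hq hno⟩
  exact Nat.sInf_mem (s := {d | Learns B I q u e d (learnTime B I q u e)}) htime

end Bottleneck

end Learning

/-! ### Saved nodes -/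

/-- The nodes whose thrifty variables are recovered from the computation: the children of `u` and
the node at depth `d e` of every branch `e < n`. -/
def saved (n u : ℕ) (d : ℕ → ℕ) : Finset ℕ :=
  {2 * u, 2 * u + 1} ∪ (Finset.range n).image fun e => branchNode u e (d e)

section Saved

variable {n u e m s y : ℕ} {d : ℕ → ℕ}

theorem mem_saved : s ∈ saved n u d ↔ s / 2 = u ∨ ∃ e < n, branchNode u e (d e) = s := by
  simp only [saved, Finset.mem_union, Finset.mem_insert, Finset.mem_singleton, Finset.mem_image,
    Finset.mem_range]
  exact or_congr_left (by omega)

theorem card_saved (hu : 2 ^ n ≤ u) : (saved n u d).card = n + 2 := by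
  have he : ∀ e < n, 2 ^ (e + 1) ≤ u := fun e he => (Nat.pow_le_pow_right two_pos he).trans hu
  rw [saved, Finset.card_union_of_disjoint, Finset.card_pair (by omega),
    Finset.card_image_of_injOn, Finset.card_range, add_comm]
  · intro e₁ he₁ e₂ he₂ heq
    exact (branchNode_inj (he e₁ (by simpa using he₁)) (he e₂ (by simpa using he₂)) heq).1
  · rw [Finset.disjoint_left]
    intro s hchild hbranch
    obtain ⟨e, hen, rfl⟩ := Finset.mem_image.1 hbranch
    refine branchNode_div_two_ne (d := d e) (he e (Finset.mem_range.1 hen)) ?_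
    simp only [Finset.mem_insert, Finset.mem_singleton] at hchild
    omega

theorem isAncestor_div_two_or_eq_branchNode (hs : s ∈ saved n u d) (hy : IsAncestor y s) :
    IsAncestor (y / 2) u ∨ ∃ e < n, ∃ m < d e, y = branchNode u e (m + 1) := by
  rcases mem_saved.1 hs with hchild | ⟨e, he, rfl⟩
  · left
    rcases hy.eq_or_div_two with rfl | hanc
    · exact hchild ▸ IsAncestor.refl _
    · exact (IsAncestor.div_two y).trans (hchild ▸ hanc)
  · rcases hy.of_branchNode with ⟨_ | m, hm, rfl⟩ | hspine
    · exact Or.inl ⟨e + 1, (branchNode_zero_div_two u e).symm⟩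
    · exact Or.inr ⟨e, he, m, hm, rfl⟩
    · exact Or.inl ((IsAncestor.div_two y).trans (hspine.trans ⟨e + 1, rfl⟩))

theorem eq_branchNode_of_isAncestor_saved (hu : 2 ^ n ≤ u) (he : e < n) (hs : s ∈ saved n u d)
    (hy : IsAncestor y s) (hparent : y / 2 = branchNode u e m) :
    m < d e ∧ y = branchNode u e (m + 1) := by
  have hpow : ∀ e < n, 2 ^ (e + 1) ≤ u := fun e he => (Nat.pow_le_pow_right two_pos he).trans hu
  rcases isAncestor_div_two_or_eq_branchNode hs hy with hanc | ⟨e', he', m', hm', rfl⟩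
  · exact absurd (hparent ▸ hanc) (not_isAncestor_branchNode (hpow e he))
  · rw [branchNode_succ_div_two] at hparent
    obtain ⟨rfl, rfl⟩ := branchNode_inj (hpow e' he') (hpow e he) hparent
    exact ⟨hm', rfl⟩

end Saved

/-! ### Decoding -/

/-- The inputs `I` and `J` agree on all variables, except perhaps the thrifty variables for `I` of
the nodes in `S`. -/
def AgreesOff {h k : ℕ} (S : Finset ℕ) (I J : TEInput h k) : Prop :=
  ∀ X, I.evalVar X ≠ J.evalVar X → ∃ i ∈ S, IsThriftyVarOf I i X

/-- Input `I` has its bottleneck at `q`, and `J` records all of `I` except the thrifty variables of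
its saved nodes. -/
structure Decodes {n k : ℕ} {R : Type} (B : DetBP (TEVar (n + 2) k) k R) (q : Fin B.size) (u : ℕ)
    (J I : TEInput (n + 2) k) : Prop where
  bottleneck : Bottleneck B I q u
  agreesOff : AgreesOff (saved n u (learnDepth B I q u)) I J

/-- The inputs `I` and `I'` learn the same node with the same value on every branch outside `U`. -/
def AgreesOutside {n k : ℕ} {R : Type} (B : DetBP (TEVar (n + 2) k) k R) (q : Fin B.size) (u : ℕ)
    (U : Finset ℕ) (I I' : TEInput (n + 2) k) : Prop :=
  ∀ e < n, e ∉ U → learnDepth B I q u e = learnDepth B I' q u e ∧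
    I.val (branchNode u e (learnDepth B I q u e)) = I'.val (branchNode u e (learnDepth B I' q u e))

section Decoding

variable {n h k u y j : ℕ} {R : Type}

theorem AgreesOff.val_eq {S : Finset ℕ} {I J : TEInput h k} (hIJ : AgreesOff S I J)
    (hy : IsNode h y) (hS : ∀ s ∈ S, ¬ IsAncestor y s) : I.val y = J.val y :=
  TEInput.val_congr hy fun _ hX => of_not_not fun hne =>
    let ⟨s, hs, hXs⟩ := hIJ _ hne
    hS s hs (hXs.node_eq ▸ hX)

variable {B : DetBP (TEVar (n + 2) k) k R} {I I' J : TEInput (n + 2) k} {q : Fin B.size}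
  {U : Finset ℕ} {X : TEVar (n + 2) k} {T : ℕ}

theorem AgreesOutside.symm (hA : AgreesOutside B q u U I I') : AgreesOutside B q u U I' I :=
  fun e he heU => (hA e he heU).imp Eq.symm Eq.symm

theorem Bottleneck.val_eq_of_div_two_eq (hI : Bottleneck B I q u) (hI' : Bottleneck B I' q u)
    (hy : y / 2 = u) : I.val y = I'.val y := by
  obtain ⟨_, hX⟩ := hI.queries.exists_internal hI.lt_two_pow
  obtain ⟨_, hX'⟩ := hI'.queries.exists_internal hI'.lt_two_pow
  injection Sum.inl.inj (hX.symm.trans hX') with _ hleft hright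
  rcases Nat.mod_two_eq_zero_or_one y with hy2 | hy2
  · rwa [show 2 * u = y by omega] at hleft
  · rwa [show 2 * u + 1 = y by omega] at hright

namespace Decodes

theorem val_eq_of_parent_mem_saved (hI : Decodes B q u J I) (hy : IsNode (n + 2) y)
    (hparent : y / 2 ∈ saved n u (learnDepth B I q u)) : I.val y = J.val y := by
  refine hI.agreesOff.val_eq hy fun s hs hys => ?_
  have hu := hI.bottleneck.two_pow_le
  rcases mem_saved.1 hparent with hchild | ⟨e, he, hbranch⟩
  · rcases isAncestor_div_two_or_eq_branchNode hs hys with hanc | ⟨e, he, m, -, rfl⟩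
    · have := hanc.le
      have := Nat.two_pow_pos n
      omega
    · rw [branchNode_succ_div_two] at hchild
      exact branchNode_div_two_ne (hI.bottleneck.two_pow_succ_le he) hchild
  · exact (eq_branchNode_of_isAncestor_saved hu he hs hys hbranch.symm).1.false

theorem evalVar_eq_of_thrifty (hI : Decodes B q u J I) (hI' : Decodes B q u J I')
    (hA : AgreesOutside B q u U I I') {i : ℕ} (hi : i ∈ saved n u (learnDepth B I q u))
    (hiU : ∀ e < n, e ∈ U → branchNode u e (learnDepth B I q u e) ≠ i)
    (hX : IsThriftyVarOf I i X) : I.evalVar X = I'.evalVar X := by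
  have hsaved' : i ∈ saved n u (learnDepth B I' q u) ∧ I.val i = I'.val i := by
    rcases mem_saved.1 hi with hchild | ⟨e, he, rfl⟩
    · exact ⟨mem_saved.2 (Or.inl hchild), hI.bottleneck.val_eq_of_div_two_eq hI'.bottleneck hchild⟩
    · obtain ⟨hdepth, hval⟩ := hA e he fun heU => hiU e he heU rfl
      exact ⟨mem_saved.2 (Or.inr ⟨e, he, by rw [hdepth]⟩), by rw [hval, hdepth]⟩
  have hX' : IsThriftyVarOf I' i X := hX.congr fun y hy hyi =>
    (hI.val_eq_of_parent_mem_saved hy (hyi ▸ hi)).trans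
      (hI'.val_eq_of_parent_mem_saved hy (hyi ▸ hsaved'.1)).symm
  rw [hX.evalVar_eq, hX'.evalVar_eq, hsaved'.2]

theorem exists_thrifty_of_evalVar_ne (hI : Decodes B q u J I) (hI' : Decodes B q u J I')
    (hA : AgreesOutside B q u U I I') (hne : I.evalVar X ≠ I'.evalVar X) :
    ∃ e < n, e ∈ U ∧ (IsThriftyVarOf I (branchNode u e (learnDepth B I q u e)) X ∨
      IsThriftyVarOf I' (branchNode u e (learnDepth B I' q u e)) X) := by
  by_contra! hno
  by_cases hJ : I.evalVar X = J.evalVar X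
  · obtain ⟨i, hi, hX⟩ := hI'.agreesOff X (hJ ▸ hne.symm)
    refine hne (hI'.evalVar_eq_of_thrifty hI hA.symm hi ?_ hX).symm
    rintro e he heU rfl
    exact (hno e he heU).2 hX
  · obtain ⟨i, hi, hX⟩ := hI.agreesOff X hJ
    refine hne (hI.evalVar_eq_of_thrifty hI' hA hi ?_ hX)
    rintro e he heU rfl
    exact (hno e he heU).1 hX

theorem evalVar_eq (hI : Decodes B q u J I) (hI' : Decodes B q u J I')
    (hA : AgreesOutside B q u ∅ I I') : I.evalVar = I'.evalVar :=
  funext fun _ => of_not_not fun hne =>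
    let ⟨_, _, he, _⟩ := hI.exists_thrifty_of_evalVar_ne hI' hA hne
    Finset.notMem_empty _ he

theorem runFrom_eq (hI : Decodes B q u J I) (hI' : Decodes B q u J I')
    (hA : AgreesOutside B q u U I I')
    (hT : ∀ e ∈ U, T ≤ learnTime B I q u e ∧ T ≤ learnTime B I' q u e) :
    B.runFrom I.evalVar q T = B.runFrom I'.evalVar q T := by
  refine DetBP.runFrom_congr fun t ht X hX hstate => of_not_not fun hne => ?_
  obtain ⟨e, he, heU, hXI | hXI'⟩ := hI.exists_thrifty_of_evalVar_ne hI' hA hne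
  · exact (hI.bottleneck.learns he).not_queriedBefore ⟨t, ht.trans_le (hT e heU).1, X, hX, hXI⟩
  · exact (hI'.bottleneck.learns he).not_queriedBefore
      ⟨t, ht.trans_le (hT e heU).2, X, hstate ▸ hX, hXI'⟩

theorem val_eq_below_spine (hI : Decodes B q u J I) (hI' : Decodes B q u J I')
    (hA : AgreesOutside B q u U I I') (hj : j ≤ n) (hU : ∀ e < j, e ∉ U)
    (hnode : IsNode (n + 2) y) (hy : IsAncestor (u / 2 ^ j) y) : I.val y = I'.val y := by
  have hbelow : ∀ e < n, ∀ d, IsAncestor (u / 2 ^ j) (branchNode u e d) → e < j :=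
    fun e he d hanc => lt_of_isAncestor_branchNode
      ((Nat.pow_le_pow_right two_pos hj).trans hI.bottleneck.two_pow_le)
      (hI.bottleneck.two_pow_succ_le he) hanc
  refine TEInput.val_congr hnode fun X hX => of_not_not fun hne => ?_
  obtain ⟨e, he, heU, hXe | hXe⟩ := hI.exists_thrifty_of_evalVar_ne hI' hA hne <;>
  · rw [hXe.node_eq] at hX
    exact hU e (hbelow e he _ (hy.trans hX)) heU

theorem val_eq_of_parent_branchNode (hI : Decodes B q u J I) (hj : j < n) {m : ℕ}
    (hy : IsNode (n + 2) y) (hparent : y / 2 = branchNode u j m)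
    (hbranch : y = branchNode u j (m + 1) → learnDepth B I q u j ≤ m) : I.val y = J.val y :=
  hI.agreesOff.val_eq hy fun _ hs hys =>
    let ⟨hlt, heq⟩ :=
      eq_branchNode_of_isAncestor_saved hI.bottleneck.two_pow_le hj hs hys hparent
    hlt.not_ge (hbranch heq)

end Decodes

end Decoding

/-! ### The next branch to be learned -/

section NextBranch

variable {n k u j : ℕ} {R : Type} {B : DetBP (TEVar (n + 2) k) k R} {I I' J : TEInput (n + 2) k}
  {q : Fin B.size} {U : Finset ℕ}

namespace Decodes

-- Learning the top of the `j`-th branch requires a query of the path node `u / 2 ^ j`, by which time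
-- all branches below it have been learned.
theorem notMem_of_learnDepth_eq_zero (hI : Decodes B q u J I) (hj : j < n)
    (hmin : ∀ e ∈ U, learnTime B I q u j ≤ learnTime B I q u e)
    (hdepth : learnDepth B I q u j = 0) : ∀ e < j, e ∉ U := by
  intro e he heU
  have hspine := (hI.bottleneck.learns hj).queriedBefore_sibling hdepth
  obtain ⟨t, ht, d, hlearn⟩ := hI.bottleneck.exists_learns_of_queriedBefore (he.trans hj) he hspine
  exact ((hmin e heU).trans hlearn.learnTime_le).not_gt ht

theorem val_sibling_eq (hI : Decodes B q u J I) (hI' : Decodes B q u J I')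
    (hA : AgreesOutside B q u U I I') (hj : j < n)
    (hmin : ∀ e ∈ U, learnTime B I q u j ≤ learnTime B I q u e) :
    I.val (sibling (branchNode u j (learnDepth B I q u j))) =
      I'.val (sibling (branchNode u j (learnDepth B I q u j))) := by
  have hinternal := (hI.bottleneck.learns hj).reveals.isInternalNode_div_two
  have hnode : IsNode (n + 2) (sibling (branchNode u j (learnDepth B I q u j))) :=
    IsInternalNode.isNode_of_div_two ((sibling_div_two _).symm ▸ hinternal)
  rcases hdepth : learnDepth B I q u j with _ | m
  · rw [hdepth, sibling_branchNode_zero] at hnode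
    rw [sibling_branchNode_zero]
    exact hI.val_eq_below_spine hI' hA hj.le (hI.notMem_of_learnDepth_eq_zero hj hmin hdepth)
      hnode (IsAncestor.refl _)
  · rw [hdepth] at hnode
    have hparent : sibling (branchNode u j (m + 1)) / 2 = branchNode u j m := by
      rw [sibling_div_two, branchNode_succ_div_two]
    have hbranch : sibling (branchNode u j (m + 1)) ≠ branchNode u j (m + 1) := sibling_ne _
    exact (hI.val_eq_of_parent_branchNode hj hnode hparent fun heq => absurd heq hbranch).trans
      (hI'.val_eq_of_parent_branchNode hj hnode hparent fun heq => absurd heq hbranch).symm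

-- Otherwise the second input learns a higher node of the branch. The children of the queried node
-- then have their values under `J` for both inputs, so that the first input queries it as well.
theorem not_queriedBefore (hI : Decodes B q u J I) (hI' : Decodes B q u J I')
    (hA : AgreesOutside B q u U I I') (hj : j < n) (hjU : j ∈ U)
    (hmin : ∀ e ∈ U, learnTime B I q u j ≤ learnTime B I q u e ∧
      learnTime B I q u j ≤ learnTime B I' q u e) :
    ¬ B.QueriedBefore I' q (branchNode u j (learnDepth B I q u j)) (learnTime B I q u j) := by
  intro hbefore
  have hlearn' := hI'.bottleneck.learns hj
  have hlt : learnDepth B I' q u j < learnDepth B I q u j := by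
    by_contra! hle
    have hno : ∀ t < learnTime B I q u j, ∀ d, ¬ Learns B I' q u j d t := fun t ht d hd =>
      ((hmin j hjU).2.trans hd.learnTime_le).not_gt ht
    have hbefore' := hI'.bottleneck.queriedBefore_branchNode_of_le hle hno
      hlearn'.reveals.isNode.2 hbefore
    exact hlearn'.not_queriedBefore (hbefore'.mono (hmin j hjU).2)
  obtain ⟨t, ht, hq⟩ := hbefore
  have hstate : B.runFrom I.evalVar q t = B.runFrom I'.evalVar q t :=
    hI.runFrom_eq hI' hA fun e heU => ⟨ht.le.trans (hmin e heU).1, ht.le.trans (hmin e heU).2⟩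
  refine (hI.bottleneck.learns hj).not_queriedBefore ⟨t, ht, ?_⟩
  rw [hstate]
  exact hq.congr fun y hy hparent =>
    (hI'.val_eq_of_parent_branchNode hj hy hparent fun _ => hlt.le).trans
      (hI.val_eq_of_parent_branchNode hj hy hparent fun _ => le_rfl).symm

theorem learns (hI : Decodes B q u J I) (hI' : Decodes B q u J I')
    (hA : AgreesOutside B q u U I I') (hj : j < n) (hjU : j ∈ U)
    (hmin : ∀ e ∈ U, learnTime B I q u j ≤ learnTime B I q u e ∧
      learnTime B I q u j ≤ learnTime B I' q u e) :
    Learns B I' q u j (learnDepth B I q u j) (learnTime B I q u j) := by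
  have hlearn := hI.bottleneck.learns hj
  have hstate : ∀ t ≤ learnTime B I q u j, B.runFrom I.evalVar q t = B.runFrom I'.evalVar q t :=
    fun t ht => hI.runFrom_eq hI' hA fun e heU =>
      ⟨ht.trans (hmin e heU).1, ht.trans (hmin e heU).2⟩
  have hminI e heU := (hmin e heU).1
  refine ⟨?_, hI.not_queriedBefore hI' hA hj hjU hmin, fun hdepth => ?_⟩
  · rw [← hstate _ le_rfl]
    exact hlearn.reveals.congr (hI.val_sibling_eq hI' hA hj hminI)
  · obtain ⟨t, ht, hq⟩ := hlearn.queriedBefore_sibling hdepth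
    refine ⟨t, ht, hstate t ht.le ▸ hq.congr fun y hy hparent => ?_⟩
    exact hI.val_eq_below_spine hI' hA hj.le (hI.notMem_of_learnDepth_eq_zero hj hminI hdepth)
      hy (hparent ▸ IsAncestor.div_two y)

theorem learnTime_eq_and_learnDepth_eq (hI : Decodes B q u J I) (hI' : Decodes B q u J I')
    (hA : AgreesOutside B q u U I I') (hj : j < n) (hjU : j ∈ U)
    (hmin : ∀ e ∈ U, learnTime B I q u j ≤ learnTime B I q u e ∧
      learnTime B I q u j ≤ learnTime B I' q u e) :
    learnTime B I' q u j = learnTime B I q u j ∧ learnDepth B I' q u j = learnDepth B I q u j := by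
  have hlearn := hI.learns hI' hA hj hjU hmin
  have htime := hlearn.learnTime_le.antisymm (hmin j hjU).2
  refine ⟨htime, (hI'.bottleneck.learns hj).depth_unique
    (hI.bottleneck.two_pow_succ_le hj) hlearn (by rw [htime])⟩

end Decodes

end NextBranch

/-! ### Counting -/

section Counting

open Finset

variable {n k p u w j d : ℕ} {B : DetBP (TEVar (n + 2) k) k Bool} {q : Fin B.size}
  {I J : TEInput (n + 2) k} {U : Finset ℕ} {F : Finset (TEInput (n + 2) k)}

open Classical in
/-- The branches in `U` that `I` learns at a state where it is not thrifty. -/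
noncomputable def exceptionalBranches (B : DetBP (TEVar (n + 2) k) k Bool) (q : Fin B.size) (u : ℕ)
    (I : TEInput (n + 2) k) (U : Finset ℕ) : Finset ℕ :=
  {e ∈ U | IsExceptionalAt B (B.runFrom I.evalVar q (learnTime B I q u e))
    (branchNode u e (learnDepth B I q u e) / 2)}

/-- A family of inputs, distinct as assignments, that share the bottleneck `q` and the data
recorded by `J`, and that differ only in what they learn on the branches in `U`. -/
structure DecodedFamily (B : DetBP (TEVar (n + 2) k) k Bool) (q : Fin B.size) (u : ℕ)
    (J : TEInput (n + 2) k) (U : Finset ℕ) (F : Finset (TEInput (n + 2) k)) : Prop where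
  decodes : ∀ I ∈ F, Decodes B q u J I
  agreesOutside : ∀ I ∈ F, ∀ I' ∈ F, AgreesOutside B q u U I I'
  injOn : Set.InjOn TEInput.evalVar (F : Set (TEInput (n + 2) k))

theorem Bottleneck.isNode_of_mem_saved (hI : Bottleneck B I q u) {i : ℕ}
    (hi : i ∈ saved n u (learnDepth B I q u)) : IsNode (n + 2) i := by
  rcases mem_saved.1 hi with rfl | ⟨e, he, rfl⟩
  · exact IsInternalNode.isNode_of_div_two
      ⟨(Nat.two_pow_pos n).trans_le hI.two_pow_le, hI.lt_two_pow⟩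
  · exact (hI.learns he).reveals.isNode

theorem mem_exceptionalBranches {e : ℕ} : e ∈ exceptionalBranches B q u I U ↔
    e ∈ U ∧ IsExceptionalAt B (B.runFrom I.evalVar q (learnTime B I q u e))
      (branchNode u e (learnDepth B I q u e) / 2) := by
  simp only [exceptionalBranches, mem_filter]

theorem exceptionalBranches_erase :
    exceptionalBranches B q u I (U.erase j) = (exceptionalBranches B q u I U).erase j := by
  ext e
  simp only [mem_erase, mem_exceptionalBranches, and_assoc]

theorem card_exceptionalBranches_le (hI : Bottleneck B I q u) :
    #(exceptionalBranches B q u I (range n)) ≤ (exceptionalNodes B I).ncard := by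
  rw [← Set.ncard_coe_finset]
  refine Set.ncard_le_ncard_of_injOn (fun e => branchNode u e (learnDepth B I q u e) / 2) ?_ ?_ ?_
  · intro e he
    obtain ⟨t, ht⟩ := hI.visits
    have hexc := (mem_exceptionalBranches.1 (mem_coe.1 he)).2
    rw [← ht, DetBP.runFrom_run, ht] at hexc
    exact ⟨_, hexc⟩
  · intro e he e' he' heq
    have hlt : ∀ e ∈ exceptionalBranches B q u I (range n), e < n := fun e he =>
      mem_range.1 (mem_exceptionalBranches.1 he).1
    exact (branchNode_inj_of_div_two_eq (hI.two_pow_succ_le (hlt e he))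
      (hI.two_pow_succ_le (hlt e' he')) heq).1
  · exact (Set.finite_lt_nat (2 ^ (n + 1))).subset fun i ⟨_, hi, _⟩ => hi.2

namespace DecodedFamily

theorem card_le_one (hF : DecodedFamily B q u J ∅ F) : #F ≤ 1 :=
  Finset.card_le_one.2 fun I hI I' hI' => hF.injOn hI hI' <|
    (hF.decodes I hI).evalVar_eq (hF.decodes I' hI') (hF.agreesOutside I hI I' hI')

theorem filter_val_eq (hF : DecodedFamily B q u J U F)
    (hd : ∀ I ∈ F, learnDepth B I q u j = d) (c : Fin k) :
    DecodedFamily B q u J (U.erase j) {I ∈ F | I.val (branchNode u j d) = c} where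
  decodes I hI := hF.decodes I (mem_filter.1 hI).1
  agreesOutside I hI I' hI' e he heU := by
    obtain ⟨⟨hI, hc⟩, ⟨hI', hc'⟩⟩ := And.intro (mem_filter.1 hI) (mem_filter.1 hI')
    by_cases hej : e = j
    · rw [hej, hd I hI, hd I' hI', hc, hc']
      exact ⟨rfl, rfl⟩
    · exact hF.agreesOutside I hI I' hI' e he fun h => heU (mem_erase.2 ⟨hej, h⟩)
  injOn := hF.injOn.mono (coe_subset.2 (filter_subset _ _))

theorem exists_next_branch (hF : DecodedFamily B q u J U F) (hne : F.Nonempty)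
    (hUne : U.Nonempty) (hU : ∀ e ∈ U, e < n) :
    ∃ j ∈ U, ∃ q' d, ∃ I₀ ∈ F, B.Reveals I₀ q' (branchNode u j d) ∧ ∀ I ∈ F,
      B.runFrom I.evalVar q (learnTime B I q u j) = q' ∧ learnDepth B I q u j = d ∧
      I.val (branchNode u j d) ∈
        candidates B q' (branchNode u j d) (I₀.val (sibling (branchNode u j d))) := by
  obtain ⟨⟨I₀, j⟩, hmem, hmin⟩ :=
    (F ×ˢ U).exists_min_image (fun x => learnTime B x.1 q u x.2) (hne.product hUne)
  obtain ⟨hI₀, hj⟩ := mem_product.1 hmem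
  have hmin : ∀ I ∈ F, ∀ e ∈ U, learnTime B I₀ q u j ≤ learnTime B I q u e := fun I hI e he =>
    hmin (I, e) (mem_product.2 ⟨hI, he⟩)
  have hdec₀ := hF.decodes I₀ hI₀
  refine ⟨j, hj, _, _, I₀, hI₀, (hdec₀.bottleneck.learns (hU j hj)).reveals, fun I hI => ?_⟩
  have hdec := hF.decodes I hI
  have hA := hF.agreesOutside I₀ hI₀ I hI
  have hminI e (he : e ∈ U) := And.intro (hmin I₀ hI₀ e he) (hmin I hI e he)
  obtain ⟨htime, hdepth⟩ := hdec₀.learnTime_eq_and_learnDepth_eq hdec hA (hU j hj) hj hminI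
  have hstate := hdec₀.runFrom_eq hdec hA hminI
  refine ⟨by rw [htime, hstate], hdepth, I, ?_, rfl,
    (hdec₀.val_sibling_eq hdec hA (hU j hj) (hmin I₀ hI₀)).symm⟩
  obtain ⟨t, ht⟩ := hdec.bottleneck.visits
  exact ⟨t + learnTime B I₀ q u j, by rw [hstate, ← DetBP.runFrom_run, ht]⟩

theorem card_le_pow (hp1 : 1 ≤ p) (hp : ThriftyBound B p) (hU : ∀ e ∈ U, e < n)
    (hF : DecodedFamily B q u J U F) (hw : ∀ I ∈ F, #(exceptionalBranches B q u I U) ≤ w) :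
    #F ≤ p ^ w := by
  induction U using Finset.strongInduction generalizing F w with
  | H U ih =>
  rcases F.eq_empty_or_nonempty with rfl | hne
  · simp
  rcases U.eq_empty_or_nonempty with rfl | hUne
  · exact hF.card_le_one.trans (Nat.one_le_pow _ _ hp1)
  obtain ⟨j, hj, q', d, I₀, hI₀, hrev, hnext⟩ := hF.exists_next_branch hne hUne hU
  set C := candidates B q' (branchNode u j d) (I₀.val (sibling (branchNode u j d)))
  have hfibre : ∀ w', (∀ I ∈ F, #(exceptionalBranches B q u I (U.erase j)) ≤ w') →
      #F ≤ p ^ w' * C.ncard := by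
    intro w' hw'
    rw [Set.ncard_eq_toFinset_card C]
    exact card_le_mul_card_image_of_maps_to
      (fun I hI => (Set.Finite.mem_toFinset _).2 (hnext I hI).2.2) _ fun c _ =>
      ih _ (erase_ssubset hj) (fun e he => hU e (mem_of_mem_erase he))
        (hF.filter_val_eq (fun I hI => (hnext I hI).2.1) c)
        fun I hI => hw' I (mem_filter.1 hI).1
  by_cases hexc : IsExceptionalAt B q' (branchNode u j d / 2)
  · have hlt : ∀ I ∈ F, #(exceptionalBranches B q u I (U.erase j)) + 1 ≤ w := by
      intro I hI
      have hmem : j ∈ exceptionalBranches B q u I U :=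
        mem_exceptionalBranches.2 ⟨hj, by rwa [(hnext I hI).1, (hnext I hI).2.1]⟩
      rw [exceptionalBranches_erase, card_erase_add_one hmem]
      exact hw I hI
    obtain ⟨w', rfl⟩ := Nat.exists_eq_add_of_le' (Nat.le_of_add_left_le (hlt I₀ hI₀))
    calc #F ≤ p ^ w' * C.ncard := hfibre w' fun I hI => Nat.le_of_add_le_add_right (hlt I hI)
      _ ≤ p ^ w' * p := Nat.mul_le_mul_left _ (hrev.candidates_ncard_le hp)
      _ = p ^ (w' + 1) := (pow_succ _ _).symm
  · calc #F ≤ p ^ w * C.ncard := hfibre w fun I hI =>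
          exceptionalBranches_erase (B := B) ▸ card_erase_le.trans (hw I hI)
      _ ≤ p ^ w * 1 := Nat.mul_le_mul_left _ (hrev.candidates_ncard_le_one hexc)
      _ = p ^ w := mul_one _

end DecodedFamily

instance {h k : ℕ} : Finite (TEVar h k) := by
  refine Finite.of_injective (β := (Fin (2 ^ h) × Fin k × Fin k) ⊕ Fin (2 ^ h)) (fun
    | .internal i hi a b => .inl (⟨i, (TEVar.internal i hi a b).isNode_node.2⟩, a, b)
    | .leaf i hi => .inr ⟨i, hi.2⟩) ?_
  rintro (_ | _) (_ | _) heq <;> simp_all [Fin.ext_iff]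

variable [NeZero k]

open Classical in
theorem pow_card_le_card_agreesOff {h : ℕ} [Fintype (TEVar h k → Fin k)] (I : TEInput h k)
    {S : Finset ℕ} (hS : ∀ i ∈ S, IsNode h i) :
    k ^ #S ≤ #{x : TEVar h k → Fin k | AgreesOff S I (TEInput.ofVars x)} := by
  have hcard : #(univ : Finset (S → Fin k)) = k ^ #S := by simp
  rw [← hcard]
  refine card_le_card_of_injOn
    (fun v => (I.setThrifty S (Function.extend Subtype.val v 0)).evalVar) ?_ ?_
  · refine fun v _ => mem_coe.2 (mem_filter.2 ⟨mem_univ _, fun X hX => ?_⟩)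
    rw [TEInput.evalVar_ofVars] at hX
    by_contra! hno
    exact hX (I.evalVar_setThrifty_of_not _ hno).symm
  · intro v _ v' _ heq
    funext ⟨i, hi⟩
    obtain ⟨X, hX⟩ := I.exists_isThriftyVarOf (hS i hi)
    have hval : ∀ v : S → Fin k,
        (I.setThrifty S (Function.extend Subtype.val v 0)).evalVar X = v ⟨i, hi⟩ := fun v =>
      (I.evalVar_setThrifty _ hi hX).trans (Subtype.val_injective.extend_apply v 0 ⟨i, hi⟩)
    exact (hval v).symm.trans ((congrFun heq X).trans (hval v'))

open Classical in
theorem card_mul_pow_le_of_bottleneck [Fintype (TEVar (n + 2) k → Fin k)] (hp1 : 1 ≤ p)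
    (hp : ThriftyBound B p) (hfew : ∀ I, (exceptionalNodes B I).ncard ≤ w)
    (F : Finset (TEVar (n + 2) k → Fin k)) (hF : ∀ x ∈ F, Bottleneck B (TEInput.ofVars x) q u) :
    #F * k ^ (n + 2) ≤ Fintype.card (TEVar (n + 2) k → Fin k) * p ^ w := by
  rw [← card_univ]
  refine card_mul_le_card_mul (fun x y => AgreesOff (saved n u (learnDepth B (.ofVars x) q u))
    (TEInput.ofVars x) (TEInput.ofVars y)) (fun x hx => ?_) fun y _ => ?_
  · have hcard := pow_card_le_card_agreesOff (.ofVars x) fun i hi =>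
      (hF x hx).isNode_of_mem_saved hi
    rwa [card_saved (hF x hx).two_pow_le] at hcard
  · have hinj : Function.Injective (TEInput.ofVars (h := n + 2) (k := k)) :=
      Function.LeftInverse.injective TEInput.evalVar_ofVars
    rw [← card_image_of_injective _ hinj]
    refine DecodedFamily.card_le_pow (q := q) (u := u) (J := .ofVars y) (U := range n) hp1 hp
      (fun e => mem_range.1) ⟨?_, ?_, ?_⟩ ?_
    · intro I hI
      obtain ⟨x, hx, rfl⟩ := mem_image.1 hI
      exact ⟨hF x (mem_filter.1 hx).1, (mem_filter.1 hx).2⟩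
    · exact fun _ _ _ _ e he heU => absurd (mem_range.2 he) heU
    · intro I hI I' hI' heq
      obtain ⟨x, -, rfl⟩ := mem_image.1 (mem_coe.1 hI)
      obtain ⟨x', -, rfl⟩ := mem_image.1 (mem_coe.1 hI')
      rw [TEInput.evalVar_ofVars, TEInput.evalVar_ofVars] at heq
      rw [heq]
    · intro I hI
      obtain ⟨x, hx, rfl⟩ := mem_image.1 hI
      exact (card_exceptionalBranches_le (hF x (mem_filter.1 hx).1)).trans (hfew _)

end Counting

theorem pow_le_size_mul_pow {n k p w : ℕ} {B : DetBP (TEVar (n + 2) k) k Bool} (hp1 : 1 ≤ p)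
    (hpk : p < k) (hB : B.SolvesBT) (hp : ThriftyBound B p)
    (hfew : ∀ I, (exceptionalNodes B I).ncard ≤ w) : k ^ (n + 2) ≤ B.size * p ^ w := by
  classical
  have : NeZero k := ⟨by omega⟩
  have := Fintype.ofFinite (TEVar (n + 2) k → Fin k)
  choose q u hbottleneck using fun x : TEVar (n + 2) k → Fin k =>
    exists_bottleneck (by omega) hpk hB hp (TEInput.ofVars x)
  have hfibre : ∀ s, (Finset.univ.filter fun x => q x = s).card * k ^ (n + 2) ≤
      Fintype.card (TEVar (n + 2) k → Fin k) * p ^ w := by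
    intro s
    rcases (Finset.univ.filter fun x => q x = s).eq_empty_or_nonempty with hempty | ⟨x₀, hx₀⟩
    · simp [hempty]
    refine card_mul_pow_le_of_bottleneck (q := s) (u := u x₀) hp1 hp hfew _ fun x hx => ?_
    obtain rfl := (Finset.mem_filter.1 hx).2
    have hx₀q : q x₀ = q x := (Finset.mem_filter.1 hx₀).2
    have hux : u x₀ = u x :=
      (hx₀q ▸ (hbottleneck x₀).queries).node_unique (hbottleneck x).queries
    exact hux ▸ hbottleneck x
  have hsum := Finset.sum_le_sum fun s (_ : s ∈ Finset.univ) => hfibre s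
  rw [← Finset.sum_mul, ← Finset.card_eq_sum_card_fiberwise fun x _ => Finset.mem_univ (q x),
    Finset.sum_const, Finset.card_univ, Finset.card_univ, Fintype.card_fin, smul_eq_mul,
    mul_left_comm] at hsum
  exact Nat.le_of_mul_le_mul_left hsum Fintype.card_pos

theorem stmt_18_general {h k π w : ℕ} (hh : 2 ≤ h) (hπ1 : 1 ≤ π) (hπk : π < k)
    {B : DetBP (TEVar h k) k Bool} (hB : B.SolvesBT) (hbound : ThriftyBound B π)
    (hfew : ∀ I, (exceptionalNodes B I).ncard ≤ w) : (k : ℝ) ^ h / (π : ℝ) ^ w ≤ B.size := by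
  obtain ⟨n, rfl⟩ := Nat.exists_eq_add_of_le' hh
  rw [div_le_iff₀ (by positivity)]
  exact_mod_cast pow_le_size_mul_pow hπ1 hπk hB hbound hfew

/-- Let `h ≥ 2`, `k ≥ 2`, `1 ≤ π < k` and `w < h - 2`. If `B` is a
deterministic `k`-way branching program solving `BT^h_2(k)` such that (a) `|LeftThrifty(q)|
≤ π` and `|RightThrifty(q)| ≤ π` for every state `q` labeled with an internal node
variable, and (b) for every input `I` there are at most `w` nodes `i` such that the
computation path of `I` visits a state `q` labeled with an `i`-variable with
`|RightThrifty(q)| > 1` or `|LeftThrifty(q)| > 1`, then `B` has at least `k^h / π^w`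
states. -/
theorem stmt_18 (h k π w : ℕ) (hh : 2 ≤ h) (hk : 2 ≤ k) (hπ1 : 1 ≤ π) (hπk : π < k)
    (hw : w < h - 2)
    (B : DetBP (TEVar h k) k Bool) (hB : B.SolvesBT)
    (hbound : ∀ (q : Fin B.size) (i : ℕ) (hi : IsInternalNode h i) (a b : Fin k),
      B.label q = Sum.inl (TEVar.internal i hi a b) →
      (LeftThrifty B q i a).ncard ≤ π ∧ (RightThrifty B q i b).ncard ≤ π)
    (hfew : ∀ I : TEInput h k,
      {i : ℕ | ∃ (t : ℕ) (hi : IsInternalNode h i) (a b : Fin k),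
        B.label (B.run I.evalVar t) = Sum.inl (TEVar.internal i hi a b) ∧
        (1 < (RightThrifty B (B.run I.evalVar t) i b).ncard ∨
         1 < (LeftThrifty B (B.run I.evalVar t) i a).ncard)}.ncard ≤ w) :
    (k : ℝ) ^ h / (π : ℝ) ^ w ≤ (B.size : ℝ) :=
  stmt_18_general hh hπ1 hπk hB hbound hfew
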